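/- For any prime p, the p-adic topology on ℕ \ pℕ coincides with the zero-dimensional reflection of the subspace ℕ_τ \ pℕ of the Golomb space ℕ_τ, i.e., the topology on ℕ \ pℕ generated by the sets (ℕ \ pℕ) ∩ (x+p^nℕ₀), x,n ∈ ℕ, equals the topology generated by the clopen subsets of the subspace ℕ_τ \ pℕ. -/

import Mathlib

/-!
The residue classes modulo powers of `p` are a base of clopen sets for the `p`-adic topology on
`ℕ \ pℕ`, and they are clopen in `ℕ_τ \ pℕ` too. What remains is that a set `S` clopen in `ℕ_τ \ pℕ`
contains a whole residue class modulo some `p ^ n` around each `x ∈ S`.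

Some progression `x + p ^ n b ℕ₀` with `p ∤ b` lies in `S`, and its closure contains every multiple
of `b` congruent to `x` modulo `p ^ n`. If some `z ≡ x [MOD p ^ n]` were outside `S`, then likewise
the complement of `S` would contain every multiple of some `c`, `p ∤ c`, congruent to `z` modulo
some `p ^ m`. A multiple of `b c` congruent to `z` modulo both powers of `p` exists by the Chinese
remainder theorem, and it would lie in `S` and in its complement.
-/

open TopologicalSpace

/-- The arithmetic progression `a + bℕ₀ = {a + b*n : n ≥ 0}` inside the positive integers. -/
def golombBasic (a b : ℕ) : Set ℕ+ := {x : ℕ+ | ∃ n : ℕ, (x : ℕ) = a + b * n}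

/-- The Golomb topology on the positive integers, generated by the arithmetic
progressions `a + bℕ₀` with coprime `a, b ∈ ℕ`. -/
instance golombTopology : TopologicalSpace ℕ+ :=
  generateFrom {S : Set ℕ+ | ∃ a b : ℕ, 0 < a ∧ 0 < b ∧ Nat.Coprime a b ∧ S = golombBasic a b}

/-- The positive integers not divisible by `p` (the set `ℕ \ pℕ`). -/
abbrev Np (p : ℕ) : Type := {x : ℕ+ // ¬ p ∣ (x : ℕ)}

/-- The `p`-adic topology on `ℕ \ pℕ`, generated by the traces of the sets
`x + p^nℕ₀`, `x, n ∈ ℕ`. -/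
def padicTop (p : ℕ) : TopologicalSpace (Np p) :=
  generateFrom {S : Set (Np p) | ∃ x n : ℕ, 0 < x ∧ 0 < n ∧
    S = {y : Np p | ∃ k : ℕ, ((y : ℕ+) : ℕ) = x + p ^ n * k}}

/-- Closure of a set of positive integers in the `p`-adic topology on `ℕ \ pℕ`,
viewed again as a set of positive integers. -/
def padicClosure (p : ℕ) (A : Set ℕ+) : Set ℕ+ :=
  Subtype.val '' (@closure (Np p) (padicTop p) (Subtype.val ⁻¹' A))

/-- `a^ℕ = {a^k : k ∈ ℕ}`, the set of positive powers of `a`. -/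
def powSet (a : ℕ) : Set ℕ+ := {y : ℕ+ | ∃ k : ℕ, 0 < k ∧ (y : ℕ) = a ^ k}

/-- The closure of `a^ℕ` in the `p`-adic topology on `ℕ \ pℕ`. -/
def clPow (p a : ℕ) : Set ℕ+ := padicClosure p (powSet a)

/-- The family `𝒳_p` of closures of the sets `a^ℕ` for `a ∈ ℕ \ pℕ`, `a ≠ 1`. -/
def XX (p : ℕ) : Set (Set ℕ+) := {X | ∃ a : ℕ, 0 < a ∧ a ≠ 1 ∧ ¬ p ∣ a ∧ X = clPow p a}

/-- The projection `π_n(X)` of a set of positive integers to `ℤ/p^nℤ`. -/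
def pin (p n : ℕ) (X : Set ℕ+) : Set (ZMod (p ^ n)) :=
  (fun y : ℕ+ => ((y : ℕ) : ZMod (p ^ n))) '' X

/-- `n(X)`: the least `n ∈ ℕ` with `X = ℕ ∩ π_n⁻¹(π_n(X))` and `|π_n(X)| ≥ max(p,3)`. -/
noncomputable def nX (p : ℕ) (X : Set ℕ+) : ℕ :=
  sInf {n : ℕ | 0 < n ∧ X = {y : ℕ+ | ((y : ℕ) : ZMod (p ^ n)) ∈ pin p n X} ∧
    max p 3 ≤ (pin p n X).ncard}

/-- `i(X)`: the index of the subgroup `π_{n(X)}(X)` in the group of units of `ℤ/p^{n(X)}ℤ`. -/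
noncomputable def iX (p : ℕ) (X : Set ℕ+) : ℕ :=
  Nat.card ((ZMod (p ^ nX p X))ˣ) / (pin p (nX p X) X).ncard

open Topology

section Progressions

variable {a b c d : ℕ} {x y : ℕ+}

lemma exists_eq_add_mul_iff_le_and_modEq {y : ℕ} :
    (∃ n, y = a + b * n) ↔ a ≤ y ∧ y ≡ a [MOD b] := by
  constructor
  · rintro ⟨n, rfl⟩
    exact ⟨Nat.le_add_right a _, by simp [Nat.ModEq]⟩
  · rintro ⟨hay, hmod⟩
    obtain ⟨n, hn⟩ := (Nat.modEq_iff_dvd' hay).1 hmod.symm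
    exact ⟨n, (Nat.sub_eq_iff_eq_add' hay).1 hn⟩

lemma mem_golombBasic_iff : y ∈ golombBasic a b ↔ a ≤ y ∧ (y : ℕ) ≡ a [MOD b] :=
  exists_eq_add_mul_iff_le_and_modEq

lemma self_mem_golombBasic (x : ℕ+) (b : ℕ) : x ∈ golombBasic x b :=
  mem_golombBasic_iff.2 ⟨le_rfl, Nat.ModEq.refl _⟩

lemma golombBasic_subset_of_mem (hx : x ∈ golombBasic a b) (hbd : b ∣ d) :
    golombBasic x d ⊆ golombBasic a b := by
  intro y hy
  rw [mem_golombBasic_iff] at hx hy ⊢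
  exact ⟨hx.1.trans hy.1, (hy.2.of_dvd hbd).trans hx.2⟩

lemma coprime_of_mem_golombBasic (hab : a.Coprime b) (hx : x ∈ golombBasic a b) :
    Nat.Coprime x b :=
  (mem_golombBasic_iff.1 hx).2.gcd_eq.trans hab

lemma golombBasic_inter_nonempty (hb : 0 < b) (hd : 0 < d) (hac : a ≡ c [MOD b.gcd d]) :
    (golombBasic a b ∩ golombBasic c d).Nonempty := by
  obtain ⟨t, hta, htc⟩ := Nat.chineseRemainder' hac
  have hbd : 0 < b * d := Nat.mul_pos hb hd
  -- A common multiple of `b` and `d` large enough to lift `t` above both first terms.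
  let s := b * d * (a + c + 1)
  have hs : a + c + 1 ≤ s := Nat.le_mul_of_pos_left _ hbd
  have hsb : t + s ≡ t [MOD b] := by simp [s, Nat.ModEq, mul_assoc]
  have hsd : t + s ≡ t [MOD d] := by simp [s, Nat.ModEq, mul_assoc, mul_left_comm b d]
  have ha : a ≤ t + s := by omega
  have hc : c ≤ t + s := by omega
  exact ⟨⟨t + s, by omega⟩, mem_golombBasic_iff.2 ⟨ha, hsb.trans hta⟩,
    mem_golombBasic_iff.2 ⟨hc, hsd.trans htc⟩⟩

end Progressions

section GolombSpace

lemma isTopologicalBasis_golombBasic :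
    IsTopologicalBasis
      {S : Set ℕ+ | ∃ a b : ℕ, 0 < a ∧ 0 < b ∧ Nat.Coprime a b ∧ S = golombBasic a b} where
  exists_subset_inter := by
    rintro _ ⟨a, b, -, hb, hab, rfl⟩ _ ⟨c, d, -, hd, hcd, rfl⟩ x ⟨hxb, hxd⟩
    have hx : Nat.Coprime x (b * d) :=
      (coprime_of_mem_golombBasic hab hxb).mul_right (coprime_of_mem_golombBasic hcd hxd)
    exact ⟨golombBasic x (b * d), ⟨x, b * d, x.pos, Nat.mul_pos hb hd, hx, rfl⟩,
      self_mem_golombBasic x _, Set.subset_inter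
        (golombBasic_subset_of_mem hxb (dvd_mul_right b d))
        (golombBasic_subset_of_mem hxd (dvd_mul_left d b))⟩
  sUnion_eq := Set.sUnion_eq_univ_iff.2 fun x =>
    ⟨golombBasic x 1, ⟨x, 1, x.pos, one_pos, Nat.coprime_one_right _, rfl⟩,
      self_mem_golombBasic x 1⟩
  eq_generateFrom := rfl

lemma hasBasis_nhds_golomb (x : ℕ+) :
    (𝓝 x).HasBasis (fun b : ℕ => 0 < b ∧ Nat.Coprime x b) (golombBasic x) := by
  refine isTopologicalBasis_golombBasic.nhds_hasBasis.to_hasBasis ?_ ?_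
  · rintro _ ⟨⟨a, b, -, hb, hab, rfl⟩, hx⟩
    exact ⟨b, ⟨hb, coprime_of_mem_golombBasic hab hx⟩, golombBasic_subset_of_mem hx dvd_rfl⟩
  · rintro b ⟨hb, hxb⟩
    exact ⟨golombBasic x b, ⟨⟨x, b, x.pos, hb, hxb, rfl⟩, self_mem_golombBasic x b⟩, subset_rfl⟩

lemma eventually_modEq_of_coprime {x : ℕ+} {b : ℕ} (hb : 0 < b) (hxb : Nat.Coprime x b) :
    ∀ᶠ y : ℕ+ in 𝓝 x, (y : ℕ) ≡ x [MOD b] :=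
  (hasBasis_nhds_golomb x).eventually_iff.2
    ⟨b, ⟨hb, hxb⟩, fun _ hy => (mem_golombBasic_iff.1 hy).2⟩

/-- A neighbourhood `w + dℕ₀` of `w` has `d` coprime to `b`, so `gcd (m * b) d` divides `m` and the
progressions meet by the Chinese remainder theorem. -/
lemma mem_closure_golombBasic {a m b : ℕ} {w : ℕ+} (hm : 0 < m) (hwa : (w : ℕ) ≡ a [MOD m])
    (hbw : b ∣ w) : w ∈ closure (golombBasic a (m * b)) := by
  refine (mem_closure_iff_nhds_basis (hasBasis_nhds_golomb w)).2 fun d ⟨hd, hwd⟩ => ?_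
  have hb : 0 < b := Nat.pos_of_dvd_of_pos hbw w.pos
  have hgcd : (m * b).gcd d ∣ m :=
    (Nat.Coprime.gcd_mul_right_cancel m (hwd.coprime_dvd_left hbw)).dvd.trans
      (Nat.gcd_dvd_left m d)
  exact golombBasic_inter_nonempty (Nat.mul_pos hm hb) hd (hwa.symm.of_dvd hgcd)

lemma isOpen_setOf_not_dvd {p : ℕ} (hp : p.Prime) : IsOpen {x : ℕ+ | ¬ p ∣ x} := by
  refine isOpen_iff_eventually.2 fun x hx => ?_
  have hxp : Nat.Coprime x p := (hp.coprime_iff_not_dvd.2 hx).symm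
  filter_upwards [eventually_modEq_of_coprime hp.pos hxp] with y hyx
  exact (hyx.dvd_iff dvd_rfl).not.2 hx

end GolombSpace

/-- The residue class of `x` modulo `p ^ n` in `ℕ \ pℕ`, that is, the closed ball of radius
`p ^ (-n)` around `x` in the `p`-adic metric. -/
def padicBall (p n : ℕ) (x : Np p) : Set (Np p) := {y | (y.1 : ℕ) ≡ x.1 [MOD p ^ n]}

section PadicBalls

variable {p : ℕ} {x : Np p}

lemma self_mem_padicBall (n : ℕ) (x : Np p) : x ∈ padicBall p n x := Nat.ModEq.refl _

lemma padicBall_antitone (x : Np p) : Antitone fun n => padicBall p n x :=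
  fun _ _ hmn _ hy => Nat.ModEq.of_dvd (pow_dvd_pow p hmn) hy

/-- Since `x < p ^ x`, the residue class of `x` modulo `p ^ (n + x)` has least element `x`. -/
lemma exists_padicBall_subset_progression (hp : 1 < p) {a n : ℕ}
    (hx : ∃ k, (x.1 : ℕ) = a + p ^ n * k) :
    ∃ m, padicBall p m x ⊆ {y : Np p | ∃ k, (y.1 : ℕ) = a + p ^ n * k} := by
  obtain ⟨hax, hmod⟩ := exists_eq_add_mul_iff_le_and_modEq.1 hx
  refine ⟨n + x.1, fun y (hy : (y.1 : ℕ) ≡ x.1 [MOD p ^ (n + x.1 : ℕ)]) => ?_⟩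
  have hlt : (x.1 : ℕ) < p ^ (n + x.1 : ℕ) :=
    (Nat.lt_pow_self hp).trans_le (Nat.pow_le_pow_right (by omega) (Nat.le_add_left _ n))
  have hxy : (x.1 : ℕ) ≤ y.1 := by
    rw [← Nat.mod_eq_of_modEq hy hlt]
    exact Nat.mod_le _ _
  exact exists_eq_add_mul_iff_le_and_modEq.2
    ⟨hax.trans hxy, (hy.of_dvd (pow_dvd_pow p (Nat.le_add_right n _))).trans hmod⟩

lemma isOpen_padicTop_iff (hp : 1 < p) {U : Set (Np p)} :
    IsOpen[padicTop p] U ↔ ∀ x ∈ U, ∃ n, padicBall p n x ⊆ U := by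
  constructor
  · intro hU x hx
    induction hU with
    | basic S hS =>
      obtain ⟨a, n, -, -, rfl⟩ := hS
      exact exists_padicBall_subset_progression hp hx
    | univ => exact ⟨0, Set.subset_univ _⟩
    | inter S T _ _ ihS ihT =>
      obtain ⟨m, hm⟩ := ihS hx.1
      obtain ⟨n, hn⟩ := ihT hx.2
      exact ⟨max m n, Set.subset_inter ((padicBall_antitone x (le_max_left m n)).trans hm)
        ((padicBall_antitone x (le_max_right m n)).trans hn)⟩
    | sUnion 𝒮 _ ih =>
      obtain ⟨S, hS, hxS⟩ := hx
      obtain ⟨n, hn⟩ := ih S hS hxS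
      exact ⟨n, hn.trans (Set.subset_sUnion_of_mem hS)⟩
  · refine fun h => (@isOpen_iff_forall_mem_open _ (padicTop p) U).2 fun x hx => ?_
    obtain ⟨n, hn⟩ := h x hx
    refine ⟨{y : Np p | ∃ k, (y.1 : ℕ) = x.1 + p ^ (n + 1) * k}, fun y hy => ?_,
      isOpen_generateFrom_of_mem ⟨x.1, n + 1, x.1.pos, n.succ_pos, rfl⟩, ⟨0, rfl⟩⟩
    exact hn (padicBall_antitone x n.le_succ (exists_eq_add_mul_iff_le_and_modEq.1 hy).2)

lemma isClopen_padicBall (hp : p.Prime) (n : ℕ) (x : Np p) : IsClopen (padicBall p n x) := by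
  have hloc : IsLocallyConstant fun y : Np p => (y.1 : ℕ) % p ^ n :=
    (IsLocallyConstant.iff_eventually_eq _).2 fun y =>
      continuous_subtype_val.continuousAt.eventually <| eventually_modEq_of_coprime
        (pow_pos hp.pos n) ((hp.coprime_iff_not_dvd.2 y.2).pow_left n).symm
  exact hloc.isClopen_fiber (x.1 % p ^ n)

lemma exists_mem_padicBall_dvd (hp : p.Prime) {b : ℕ} (hb : ¬ p ∣ b) (n : ℕ) (x : Np p) :
    ∃ w ∈ padicBall p n x, b ∣ w.1 := by
  have hcop : Nat.Coprime (p ^ (n + 1)) b := (hp.coprime_iff_not_dvd.2 hb).pow_left _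
  obtain ⟨w, hwx, hwb⟩ := Nat.chineseRemainder hcop x.1 0
  have hpw : ¬ p ∣ w := (hwx.dvd_iff (dvd_pow_self p n.succ_ne_zero)).not.2 x.2
  have hw : 0 < w := Nat.pos_of_ne_zero fun h => hpw (h ▸ dvd_zero p)
  exact ⟨⟨⟨w, hw⟩, hpw⟩, hwx.of_dvd (pow_dvd_pow p n.le_succ), Nat.modEq_zero_iff_dvd.1 hwb⟩

lemma exists_forall_dvd_mem_of_isClopen (hp : p.Prime) {S : Set (Np p)} (hS : IsClopen S)
    (hx : x ∈ S) : ∃ n b, ¬ p ∣ b ∧ ∀ w ∈ padicBall p n x, b ∣ w.1 → w ∈ S := by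
  have hSopen : IsOpen (Subtype.val '' S) :=
    (isOpen_setOf_not_dvd hp).isOpenMap_subtype_val S hS.isOpen
  obtain ⟨d, ⟨hd, -⟩, hdS⟩ :=
    (hasBasis_nhds_golomb x.1).mem_iff.1 (hSopen.mem_nhds (Set.mem_image_of_mem _ hx))
  obtain ⟨n, b, hb, rfl⟩ := Nat.exists_eq_pow_mul_and_not_dvd hd.ne' p hp.ne_one
  refine ⟨n, b, hb, fun w hw hbw => hS.isClosed.closure_subset (closure_subtype.2 ?_)⟩
  exact closure_mono hdS (mem_closure_golombBasic (pow_pos hp.pos n) hw hbw)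

lemma exists_padicBall_subset_of_isClopen (hp : p.Prime) {S : Set (Np p)} (hS : IsClopen S)
    (hx : x ∈ S) : ∃ n, padicBall p n x ⊆ S := by
  obtain ⟨n, b, hb, hbS⟩ := exists_forall_dvd_mem_of_isClopen hp hS hx
  refine ⟨n, fun z hzx => by_contra fun hz => ?_⟩
  obtain ⟨m, c, hc, hcS⟩ := exists_forall_dvd_mem_of_isClopen hp hS.compl hz
  obtain ⟨w, hwz, hbcw⟩ := exists_mem_padicBall_dvd hp (hp.not_dvd_mul hb hc) (max n m) z
  have hwx : w ∈ padicBall p n x :=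
    Nat.ModEq.trans (padicBall_antitone z (le_max_left n m) hwz) hzx
  have hwz' : w ∈ padicBall p m z := padicBall_antitone z (le_max_right n m) hwz
  exact hcS w hwz' (dvd_of_mul_left_dvd hbcw) (hbS w hwx (dvd_of_mul_right_dvd hbcw))

end PadicBalls

/-- The `p`-adic topology on `ℕ \ pℕ` coincides with the zero-dimensional reflection
(the topology generated by the clopen sets) of the subspace `ℕ_τ \ pℕ` of the Golomb
space. -/
theorem padic_eq_zeroDimReflection (p : ℕ) (hp : p.Prime) :
    padicTop p = generateFrom {S : Set (Np p) | IsClopen S} := by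
  apply le_antisymm
  · exact le_generateFrom fun S hS => (isOpen_padicTop_iff hp.one_lt).2 fun x hx =>
      exists_padicBall_subset_of_isClopen hp hS hx
  · intro U hU
    refine (@isOpen_iff_forall_mem_open _ (generateFrom _) U).2 fun x hx => ?_
    obtain ⟨n, hn⟩ := (isOpen_padicTop_iff hp.one_lt).1 hU x hx
    exact ⟨padicBall p n x, hn, isOpen_generateFrom_of_mem (isClopen_padicBall hp n x),
      self_mem_padicBall n x⟩
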